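/- For λ > 0 and all s, t, θ ∈ ℝ: j_λ(√(s² + t² − 2st cos θ)) = Σ_{n=0}^∞ ((n+λ)(2λ)_n/(λ n!)) (Γ(λ+1)/(2^n Γ(n+λ+1)))² (st)^n j_{n+λ}(s) j_{n+λ}(t) C̃_n^λ(cos θ), with uniform convergence in θ. -/

import Mathlib

open Filter

/-- The normalized Bessel function
`j_α(x) = Γ(α+1) Σ_{n≥0} (−1)^n (x/2)^{2n} / (n! Γ(n+α+1))`. -/
noncomputable def besselJR (α : ℝ) (x : ℝ) : ℝ :=
  Real.Gamma (α + 1) *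
    ∑' n : ℕ, ((-1 : ℝ)) ^ n * (x / 2) ^ (2 * n) /
      ((n.factorial : ℝ) * Real.Gamma ((n : ℝ) + α + 1))

/-- The Pochhammer symbol `(a)_n`. -/
noncomputable def poch (a : ℝ) (n : ℕ) : ℝ := (ascPochhammer ℝ n).eval a

/-- The Gegenbauer polynomial normalized by `C̃_n^λ(1) = 1`, i.e.
`C̃_n^λ(x) = ₂F₁(−n, n+2λ; λ+1/2; (1−x)/2)`. -/
noncomputable def gegenbauerN (lam : ℝ) (n : ℕ) (x : ℝ) : ℝ :=
  ∑ j ∈ Finset.range (n + 1),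
    poch (-(n : ℝ)) j * poch ((n : ℝ) + 2 * lam) j /
      (poch (lam + 1/2) j * (j.factorial : ℝ)) * ((1 - x) / 2) ^ j


/-- reciprocal Gamma -/
noncomputable def gi (x : ℝ) : ℝ := (Real.Gamma x)⁻¹

lemma gi_rec (x : ℝ) : gi x = x * gi (x + 1) := by
  unfold gi
  by_cases h : x = 0
  · subst h; simp
  · rw [Real.Gamma_add_one h, mul_inv, ← mul_assoc, mul_inv_cancel₀ h, one_mul]

lemma gi_nat (n : ℕ) : gi ((n : ℝ) + 1) = ((n.factorial : ℝ))⁻¹ := by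
  unfold gi; rw [Real.Gamma_nat_eq_factorial]

lemma gi_nonpos (x : ℝ) (n : ℕ) (h : x = -(n : ℝ)) : gi x = 0 := by
  unfold gi; rw [h, Real.Gamma_neg_nat_eq_zero]; simp

lemma poch_zero (a : ℝ) : poch a 0 = 1 := by simp [poch]

lemma poch_succ (a : ℝ) (n : ℕ) : poch a (n + 1) = poch a n * (a + n) := by
  unfold poch; exact ascPochhammer_succ_eval n a

lemma poch_succ_left (a : ℝ) (n : ℕ) : poch a (n + 1) = a * poch (a + 1) n := by
  unfold poch; rw [ascPochhammer_succ_left]; simp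

lemma poch_add (a : ℝ) (m n : ℕ) : poch a (m + n) = poch a m * poch (a + m) n := by
  induction n with
  | zero => simp [poch_zero]
  | succ n ih => rw [← add_assoc, poch_succ, ih, poch_succ]; push_cast; ring

lemma poch_double (a : ℝ) (n : ℕ) :
    poch (2 * a) (2 * n) = 4 ^ n * poch a n * poch (a + 1/2) n := by
  induction n with
  | zero => simp [poch_zero]
  | succ n ih =>
    rw [show 2 * (n + 1) = 2 * n + 1 + 1 by ring, poch_succ, poch_succ, ih, poch_succ, poch_succ]
    push_cast; ring

lemma poch_pos (a : ℝ) (ha : 0 < a) (n : ℕ) : 0 < poch a n := by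
  induction n with
  | zero => simp [poch_zero]
  | succ n ih => rw [poch_succ]; positivity

lemma poch_neg (m j : ℕ) :
    poch (-((m : ℝ) + j)) j * (m.factorial : ℝ) = (-1) ^ j * ((m + j).factorial : ℝ) := by
  induction j with
  | zero => simp [poch_zero]
  | succ j ih =>
    rw [poch_succ_left, show -((m : ℝ) + ((j + 1 : ℕ) : ℝ)) + 1 = -((m : ℝ) + j) by push_cast; ring,
      mul_assoc, ih, ← add_assoc, Nat.factorial_succ]
    push_cast; ring

lemma Gamma_poch (a : ℝ) (ha : 0 < a) (n : ℕ) :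
    Real.Gamma (a + n) = poch a n * Real.Gamma a := by
  induction n with
  | zero => simp [poch_zero]
  | succ n ih =>
    rw [poch_succ]; push_cast
    rw [← add_assoc, Real.Gamma_add_one (by positivity), ih]; ring

lemma poch_two_le (a : ℝ) (ha : 0 < a) (n : ℕ) : poch (2 * a) n ≤ 2 ^ n * poch a n := by
  induction n with
  | zero => simp [poch_zero]
  | succ n ih =>
    rw [poch_succ, poch_succ]
    have h2 : 2 * a + n ≤ 2 * (a + n) := by have : (0:ℝ) ≤ n := by positivity
                                            linarith
    calc _ ≤ (2 ^ n * poch a n) * (2 * (a + n)) := by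
          apply mul_le_mul ih h2 (by positivity)
          have := poch_pos a ha n; positivity
      _ = _ := by ring

/-- the Wilf–Zeilberger summand -/
noncomputable def wzT (μ : ℝ) (P Q e r : ℕ) : ℝ :=
  Real.Gamma μ * (2 * r + e + μ) * (poch (2 * μ) (2 * r + e) * gi (2 * r + e + 1)) *
    gi ((P:ℝ) - r + 1) * gi ((Q:ℝ) - r + 1) * gi (P + r + e + μ + 1) * gi (Q + r + e + μ + 1)

noncomputable def wzG (μ : ℝ) (P Q e r : ℕ) : ℝ :=
  - (Real.Gamma μ * (2 * r + e) * (2 * r + e - 1) * (poch (2 * μ) (2 * r + e) * gi (2 * r + e + 1)) *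
    gi ((P:ℝ) - r + 2) * gi ((Q:ℝ) - r + 1) * gi (P + r + e + μ + 1) * gi (Q + r + e + μ))

lemma wz_step (μ : ℝ) (P Q e r : ℕ) :
    (2 * P + e + 1 : ℝ) * (2 * P + e + 2) * (P + Q + e + μ + 1) * wzT μ (P + 1) Q e r
      - 2 * (2 * (P + Q + e) + 1) * wzT μ P Q e r = wzG μ P Q e (r + 1) - wzG μ P Q e r := by
  unfold wzT wzG
  rw [show 2 * (r + 1) + e = (2 * r + e) + 1 + 1 by ring, poch_succ, poch_succ]
  push_cast
  rw [show (P:ℝ) + 1 - r + 1 = P - r + 2 by ring, show (P:ℝ) + 1 + r + e + μ + 1 = P + r + e + μ + 2 by ring,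
    show (P:ℝ) - (r + 1) + 2 = P - r + 1 by ring, show (Q:ℝ) - (r + 1) + 1 = Q - r by ring,
    show (P:ℝ) + (r + 1) + e + μ + 1 = P + r + e + μ + 2 by ring,
    show (Q:ℝ) + (r + 1) + e + μ = Q + r + e + μ + 1 by ring,
    show (2:ℝ) * (r + 1) + e + 1 = 2 * r + e + 3 by ring]
  have h1 := gi_rec ((P:ℝ) - r + 1)
  have h2 := gi_rec ((Q:ℝ) - r)
  have h3 := gi_rec ((P:ℝ) + r + e + μ + 1)
  have h4 := gi_rec ((Q:ℝ) + r + e + μ)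
  have h5 := gi_rec (2 * (r:ℝ) + e + 1)
  have h6 := gi_rec (2 * (r:ℝ) + e + 2)
  rw [show (P:ℝ) - r + 1 + 1 = P - r + 2 by ring] at h1
  rw [show (P:ℝ) + r + e + μ + 1 + 1 = P + r + e + μ + 2 by ring] at h3
  rw [show (2 * (r:ℝ) + e + 1 + 1) = 2 * r + e + 2 by ring] at h5
  rw [show (2 * (r:ℝ) + e + 2 + 1) = 2 * r + e + 3 by ring] at h6
  rw [h1, h2, h3, h4, h5, h6]
  ring

lemma wz_sum (μ : ℝ) (hμ : 0 < μ) (P Q e : ℕ) (he : e = 0 ∨ e = 1) :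
    ∑ r ∈ Finset.range (P + 1), wzT μ P Q e r =
      ((2 * (P + Q + e)).factorial : ℝ) * gi (2 * P + e + 1) * gi (2 * Q + e + 1) *
        gi (P + Q + e + 1) * gi (P + Q + e + μ + 1) := by
  induction P with
  | zero =>
    simp only [zero_add, Finset.sum_range_one]
    unfold wzT
    have hG : Real.Gamma μ * gi (μ + 1) * μ = 1 := by
      have := Real.Gamma_pos_of_pos hμ
      unfold gi; rw [Real.Gamma_add_one hμ.ne']; field_simp
    have g1 : gi 1 = 1 := by simp [gi]
    have g2 : gi 2 = 1 := by simp [gi]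
    rcases he with rfl | rfl
    · simp [poch_zero, g1]
      have := gi_nat (2 * Q); push_cast at this
      rw [this]
      have : ((2 * Q).factorial : ℝ) ≠ 0 := by positivity
      field_simp
      left
      linear_combination (gi (Q + 1)) * hG
    · have h1 := gi_rec (μ + 1)
      have h2 := gi_nat (2 * Q + 1); push_cast at h2
      have h3 := gi_rec ((Q:ℝ) + 1)
      have h0 : (((2 * Q + 1).factorial : ℕ) : ℝ) ≠ 0 := by positivity
      have h4 : ((2 * (Q + 1)).factorial : ℝ) = (2 * Q + 2) * (2 * Q + 1).factorial := by
        rw [show 2 * (Q + 1) = 2 * Q + 1 + 1 by ring, Nat.factorial_succ]; push_cast; ring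
      rw [h4]
      simp [poch_succ, poch_zero, g1]
      norm_num [g1, g2]
      rw [h2, h3, show (1:ℝ) + μ + 1 = μ + 1 + 1 by ring]
      rw [h1] at hG
      field_simp
      left
      linear_combination (gi (Q + 1 + 1)) * hG
  | succ P ih =>
    have tel := Finset.sum_range_sub (wzG μ P Q e) (P + 2)
    have z1 : wzG μ P Q e 0 = 0 := by
      unfold wzG; rcases he with rfl | rfl <;> simp
    have z2 : wzG μ P Q e (P + 2) = 0 := by
      unfold wzG
      rw [gi_nonpos ((P:ℝ) - ((P + 2 : ℕ):ℝ) + 2) 0 (by push_cast; ring)]; ring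
    have z3 : wzT μ P Q e (P + 1) = 0 := by
      unfold wzT
      rw [gi_nonpos ((P:ℝ) - ((P + 1 : ℕ):ℝ) + 1) 0 (by push_cast; ring)]; ring
    rw [z1, z2, Finset.sum_congr rfl (fun r _ => (wz_step μ P Q e r).symm), Finset.sum_sub_distrib,
      ← Finset.mul_sum, ← Finset.mul_sum] at tel
    rw [Finset.sum_range_succ (fun r => wzT μ P Q e r) (P + 1), z3, ih] at tel
    have hc : (2 * P + e + 1 : ℝ) * (2 * P + e + 2) * (P + Q + e + μ + 1) ≠ 0 := by positivity
    apply mul_left_cancel₀ hc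
    have h1 := gi_rec (2 * (P:ℝ) + e + 1)
    have h2 := gi_rec (2 * (P:ℝ) + e + 2)
    have h3 := gi_rec ((P:ℝ) + Q + e + 1)
    have h4 := gi_rec ((P:ℝ) + Q + e + μ + 1)
    rw [show 2 * (P:ℝ) + e + 1 + 1 = 2 * P + e + 2 by ring] at h1
    rw [show 2 * (P:ℝ) + e + 2 + 1 = 2 * P + e + 3 by ring] at h2
    rw [h1, h2, h3, h4] at tel
    rw [show 2 * (P + 1 + Q + e) = 2 * (P + Q + e) + 1 + 1 by ring, Nat.factorial_succ, Nat.factorial_succ]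
    push_cast
    rw [show (2 * ((P:ℝ) + 1) + e + 1) = 2 * P + e + 3 by ring,
      show (P:ℝ) + 1 + Q + e + 1 = P + Q + e + 1 + 1 by ring,
      show (P:ℝ) + 1 + Q + e + μ + 1 = P + Q + e + μ + 1 + 1 by ring]
    linear_combination tel

lemma gi_pos (x : ℝ) (hx : 0 < x) : 0 < gi x := by
  unfold gi; exact inv_pos.mpr (Real.Gamma_pos_of_pos hx)

lemma one_le_poch (x : ℝ) (hx : 1 ≤ x) (n : ℕ) : 1 ≤ poch x n := by
  induction n with
  | zero => simp [poch_zero]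
  | succ n ih =>
    rw [poch_succ]
    have : (0:ℝ) ≤ n := by positivity
    nlinarith

lemma gi_le (x : ℝ) (hx : 1 ≤ x) (n : ℕ) : gi (x + n) ≤ gi x := by
  unfold gi
  have h0 := Real.Gamma_pos_of_pos (show 0 < x by linarith)
  apply inv_anti₀ h0
  rw [Gamma_poch x (by linarith)]
  have := one_le_poch x hx n
  nlinarith

lemma hasSum_antidiag {f : ℕ × ℕ → ℝ} {S : ℝ} (h : HasSum f S) :
    HasSum (fun n => ∑ x ∈ Finset.HasAntidiagonal.antidiagonal n, f x) S := by
  have := h.tsum_fiberwise (fun x : ℕ × ℕ => x.1 + x.2)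
  have key : ∀ n, ∑' x : ((fun x : ℕ × ℕ => x.1 + x.2) ⁻¹' {n}), f x =
      ∑ x ∈ Finset.HasAntidiagonal.antidiagonal n, f x := ?_
  · rwa [funext key] at this
  intro n
  have hset : (fun x : ℕ × ℕ => x.1 + x.2) ⁻¹' {n} =
      ((Finset.HasAntidiagonal.antidiagonal n : Finset (ℕ × ℕ)) : Set (ℕ × ℕ)) := by
    ext x; simp
  rw [hset, Finset.tsum_subtype']

noncomputable def phiT (α z : ℝ) (k : ℕ) : ℝ := (-1) ^ k * z ^ k * gi (k + 1) * gi (k + α + 1)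

noncomputable def phi (α z : ℝ) : ℝ := ∑' k : ℕ, phiT α z k

lemma phiT_bound (α z : ℝ) (hα : 0 ≤ α) (k : ℕ) :
    ‖phiT α z k‖ ≤ |z| ^ k / (k.factorial : ℝ) * gi (α + 1) := by
  unfold phiT
  rw [gi_nat, norm_mul, norm_mul, norm_mul]
  have h1 := gi_le (α + 1) (by linarith) k
  have h2 := gi_pos ((k:ℝ) + α + 1) (by positivity)
  rw [show α + 1 + (k:ℝ) = k + α + 1 by ring] at h1
  simp only [norm_pow, norm_neg, norm_one, one_pow, one_mul, Real.norm_eq_abs]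
  rw [abs_of_pos h2, abs_of_pos (by positivity : (0:ℝ) < ((k.factorial : ℝ))⁻¹), div_eq_mul_inv]
  gcongr

lemma phiT_norm_summable (α z : ℝ) (hα : 0 ≤ α) : Summable (fun k => ‖phiT α z k‖) :=
  Summable.of_nonneg_of_le (fun _ => norm_nonneg _) (phiT_bound α z hα)
    ((Real.summable_pow_div_factorial _).mul_right _)

lemma phi_hasSum (α z : ℝ) (hα : 0 ≤ α) : HasSum (phiT α z) (phi α z) :=
  (phiT_norm_summable α z hα).of_norm.hasSum

lemma phi_bound (α z : ℝ) (hα : 0 ≤ α) : |phi α z| ≤ Real.exp |z| * gi (α + 1) := by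
  have h : HasSum (fun k : ℕ => |z| ^ k / (k.factorial : ℝ) * gi (α + 1)) (Real.exp |z| * gi (α + 1)) := by
    apply HasSum.mul_right
    have := NormedSpace.expSeries_div_hasSum_exp (𝔸 := ℝ) |z|
    rwa [← Real.exp_eq_exp_ℝ] at this
  exact tsum_of_norm_bounded h (phiT_bound α z hα)

lemma bessel_phi (α x : ℝ) : besselJR α x = Real.Gamma (α + 1) * phi α ((x / 2) ^ 2) := by
  unfold besselJR phi
  congr 1
  apply tsum_congr
  intro k
  unfold phiT
  rw [gi_nat, gi, ← pow_mul]
  field_simp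

noncomputable def cf (μ : ℝ) (m : ℕ) : ℝ := Real.Gamma μ * (m + μ) * (poch (2 * μ) m * gi (m + 1))

lemma cf_pos (μ : ℝ) (hμ : 0 < μ) (m : ℕ) : 0 < cf μ m := by
  unfold cf
  have := Real.Gamma_pos_of_pos hμ
  have := poch_pos (2 * μ) (by positivity) m
  have := gi_pos ((m:ℝ) + 1) (by positivity)
  positivity

lemma cf_bound (μ : ℝ) (hμ : 0 < μ) (m : ℕ) :
    cf μ m * gi (m + μ + 1) ≤ 2 ^ m / (m.factorial : ℝ) := by
  unfold cf
  rw [gi_nat, gi, show (m:ℝ) + μ + 1 = (μ + m) + 1 by ring, Real.Gamma_add_one (by positivity),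
    Gamma_poch μ hμ]
  have h1 := Real.Gamma_pos_of_pos hμ
  have h2 := poch_pos μ hμ m
  have h3 := poch_two_le μ hμ m
  have : Real.Gamma μ * (m + μ) * (poch (2 * μ) m * ((m.factorial : ℝ))⁻¹) * ((μ + m) * (poch μ m * Real.Gamma μ))⁻¹
    = (poch (2 * μ) m / poch μ m) / (m.factorial : ℝ) := by
    have : μ + m ≠ 0 := by positivity
    field_simp
    ring
  rw [this]
  gcongr
  rw [div_le_iff₀ h2]; exact h3

noncomputable def triU (μ a b : ℝ) (x : ℕ × ℕ × ℕ) : ℝ :=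
  cf μ x.1 * (a * b) ^ x.1 * (phiT (x.1 + μ) (a ^ 2) x.2.1 * phiT (x.1 + μ) (b ^ 2) x.2.2)

lemma exp_sum2 (A B : ℝ) (hA : 0 ≤ A) (hB : 0 ≤ B) :
    Summable (fun x : ℕ × ℕ => A ^ x.1 / (x.1.factorial : ℝ) * (B ^ x.2 / (x.2.factorial : ℝ))) := by
  refine Summable.mul_of_nonneg (f := fun k : ℕ => A ^ k / (k.factorial : ℝ)) (g := fun k : ℕ => B ^ k / (k.factorial : ℝ))
    (Real.summable_pow_div_factorial A) (Real.summable_pow_div_factorial B) ?_ ?_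
  · intro k; simp only [Pi.zero_apply]; positivity
  · intro k; simp only [Pi.zero_apply]; positivity

lemma exp_sum3 (A B C : ℝ) (hA : 0 ≤ A) (hB : 0 ≤ B) (hC : 0 ≤ C) :
    Summable (fun x : ℕ × ℕ × ℕ => A ^ x.1 / (x.1.factorial : ℝ) *
      (B ^ x.2.1 / (x.2.1.factorial : ℝ) * (C ^ x.2.2 / (x.2.2.factorial : ℝ)))) := by
  refine Summable.mul_of_nonneg (f := fun k : ℕ => A ^ k / (k.factorial : ℝ))
    (g := fun x : ℕ × ℕ => B ^ x.1 / (x.1.factorial : ℝ) * (C ^ x.2 / (x.2.factorial : ℝ)))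
    (Real.summable_pow_div_factorial A) (exp_sum2 B C hB hC) ?_ ?_
  · intro k; simp only [Pi.zero_apply]; positivity
  · intro k; simp only [Pi.zero_apply]; positivity

lemma triU_summable (μ a b : ℝ) (hμ : 0 < μ) : Summable (triU μ a b) := by
  have hs : Summable (fun x : ℕ × ℕ × ℕ => gi (μ + 1) * (|2 * (a * b)| ^ x.1 / (x.1.factorial : ℝ) *
      (|a ^ 2| ^ x.2.1 / (x.2.1.factorial : ℝ) * (|b ^ 2| ^ x.2.2 / (x.2.2.factorial : ℝ))))) := by
    exact (exp_sum3 |2 * (a * b)| |a ^ 2| |b ^ 2| (abs_nonneg _) (abs_nonneg _) (abs_nonneg _)).mul_left _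
  refine Summable.of_norm_bounded hs ?_
  rintro ⟨m, p, q⟩
  simp only [triU]
  rw [norm_mul, norm_mul, norm_mul, Real.norm_of_nonneg (cf_pos μ hμ m).le]
  have h1 := phiT_bound (m + μ) (a ^ 2) (by positivity) p
  have h2 := phiT_bound (m + μ) (b ^ 2) (by positivity) q
  have h3 := cf_bound μ hμ m
  have h4 := gi_le (μ + 1) (by linarith) m
  rw [show μ + 1 + (m:ℝ) = m + μ + 1 by ring] at h4
  have h5 := gi_pos ((m:ℝ) + μ + 1) (by positivity)
  have hc := cf_pos μ hμ m
  have e1 : ‖(a * b) ^ m‖ = |a * b| ^ m := by simp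
  have e2 : |2 * (a * b)| ^ m = 2 ^ m * |a * b| ^ m := by rw [abs_mul, mul_pow]; simp
  rw [e1, e2]
  set A := |a ^ 2| ^ p / (p.factorial : ℝ)
  set B := |b ^ 2| ^ q / (q.factorial : ℝ)
  have hA : 0 ≤ A := by positivity
  have hB : 0 ≤ B := by positivity
  calc cf μ m * |a * b| ^ m * (‖phiT (m + μ) (a ^ 2) p‖ * ‖phiT (m + μ) (b ^ 2) q‖)
      ≤ cf μ m * |a * b| ^ m * ((A * gi (m + μ + 1)) * (B * gi (m + μ + 1))) := by gcongr
    _ = (cf μ m * gi (m + μ + 1)) * gi (m + μ + 1) * (|a * b| ^ m * (A * B)) := by ring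
    _ ≤ (2 ^ m / (m.factorial : ℝ)) * gi (μ + 1) * (|a * b| ^ m * (A * B)) := by gcongr
    _ = _ := by ring

noncomputable def triV (μ a b : ℝ) (y : ℕ × ℕ) : ℝ :=
  (-1) ^ y.1 * gi (y.1 + 1) * gi (y.1 + μ + 1) *
    (a ^ y.2 * (-b) ^ (2 * y.1 - y.2) * ((2 * y.1).choose y.2 : ℝ))

lemma triU_term (μ a b : ℝ) (P Q e r : ℕ) (hP : r ≤ P) (hQ : r ≤ Q) :
    triU μ a b (2 * r + e, P - r, Q - r) =
      (-1) ^ (P + Q + e) * (a ^ (2 * P + e) * (-b) ^ (2 * Q + e)) * wzT μ P Q e r := by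
  obtain ⟨p, rfl⟩ := Nat.exists_eq_add_of_le hP
  obtain ⟨q, rfl⟩ := Nat.exists_eq_add_of_le hQ
  simp only [triU, wzT, phiT, cf, Nat.add_sub_cancel_left]
  push_cast
  rw [show (r:ℝ) + p - r + 1 = p + 1 by ring, show (r:ℝ) + q - r + 1 = q + 1 by ring,
    show (p:ℝ) + (2 * r + e + μ) + 1 = r + p + r + e + μ + 1 by ring,
    show (q:ℝ) + (2 * r + e + μ) + 1 = r + q + r + e + μ + 1 by ring]
  have hs : (-1 : ℝ) ^ (r + p + (r + q) + e) * (-b) ^ (2 * (r + q) + e) =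
      (-1) ^ p * (-1) ^ q * b ^ (2 * (r + q) + e) := by
    rw [neg_pow b, ← mul_assoc, ← pow_add, ← pow_add]
    congr 1
    rw [show r + p + (r + q) + e + (2 * (r + q) + e) = (p + q) + 2 * (2 * r + q + e) by ring, pow_add, pow_mul]
    simp
  have hs' : (a * b) ^ (2 * r + e) * ((a ^ 2) ^ p * (b ^ 2) ^ q) =
    a ^ (2 * (r + p) + e) * b ^ (2 * (r + q) + e) := by ring
  linear_combination (exp := 1) ((-1) ^ p * (-1) ^ q * (Real.Gamma μ * (2 * r + e + μ) * (poch (2 * μ) (2 * r + e) * gi (2 * r + e + 1)) *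
    gi ((p:ℝ) + 1) * gi ((q:ℝ) + 1) * gi (r + p + r + e + μ + 1) * gi (r + q + r + e + μ + 1))) * hs'
    - (a ^ (2 * (r + p) + e)) * (Real.Gamma μ * (2 * r + e + μ) * (poch (2 * μ) (2 * r + e) * gi (2 * r + e + 1)) *
    gi ((p:ℝ) + 1) * gi ((q:ℝ) + 1) * gi (r + p + r + e + μ + 1) * gi (r + q + r + e + μ + 1)) * hs

lemma fiber_sum (μ a b : ℝ) (hμ : 0 < μ) (k i : ℕ) :
    ∑' x : ((fun x : ℕ × ℕ × ℕ => (x.1 + x.2.1 + x.2.2, x.1 + 2 * x.2.1)) ⁻¹' {(k, i)}), triU μ a b x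
      = triV μ a b (k, i) := by
  by_cases hi : i ≤ 2 * k
  · obtain ⟨P, Q, e, he, rfl, rfl⟩ : ∃ P Q e : ℕ, (e = 0 ∨ e = 1) ∧ i = 2 * P + e ∧ k = P + Q + e :=
      ⟨i / 2, k - i / 2 - i % 2, i % 2, by omega, by omega, by omega⟩
    have hset : ((fun x : ℕ × ℕ × ℕ => (x.1 + x.2.1 + x.2.2, x.1 + 2 * x.2.1)) ⁻¹' {(P + Q + e, 2 * P + e)})
        = (((Finset.range (min P Q + 1)).image (fun r => (2 * r + e, P - r, Q - r)) : Finset (ℕ × ℕ × ℕ)) :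
          Set (ℕ × ℕ × ℕ)) := by
      ext ⟨m, p, q⟩
      simp only [Set.mem_preimage, Set.mem_singleton_iff, Prod.mk.injEq, Finset.coe_image, Set.mem_image,
        Finset.coe_range, Set.mem_Iio]
      constructor
      · rintro ⟨h1, h2⟩
        exact ⟨P - p, by omega, by omega, by omega, by omega⟩
      · rintro ⟨r, h1, h2, h3, h4⟩
        omega
    rw [hset, Finset.tsum_subtype', Finset.sum_image (by
      intro x _ y _ h
      simp only [Prod.mk.injEq] at h
      omega)]
    rw [Finset.sum_congr rfl (fun r hr => triU_term μ a b P Q e r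
      (by have := Finset.mem_range.mp hr; omega) (by have := Finset.mem_range.mp hr; omega)),
      ← Finset.mul_sum]
    have hsub : ∑ r ∈ Finset.range (min P Q + 1), wzT μ P Q e r = ∑ r ∈ Finset.range (P + 1), wzT μ P Q e r := by
      apply Finset.sum_subset
      · intro r; simp only [Finset.mem_range]; omega
      · intro r h1 h2
        simp only [Finset.mem_range] at h1 h2
        unfold wzT
        obtain ⟨d, rfl⟩ : ∃ d, r = Q + 1 + d := ⟨r - (Q + 1), by omega⟩
        rw [gi_nonpos ((Q:ℝ) - ((Q + 1 + d : ℕ):ℝ) + 1) d (by push_cast; ring)]; ring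
    rw [hsub, wz_sum μ hμ P Q e he]
    unfold triV
    simp only
    rw [show 2 * (P + Q + e) - (2 * P + e) = 2 * Q + e by omega]
    have hch := Nat.add_choose_mul_factorial_mul_factorial (2 * P + e) (2 * Q + e)
    rw [show 2 * P + e + (2 * Q + e) = 2 * (P + Q + e) by ring, ← show (2 * (P + Q + e)).choose (2 * P + e) = _ from
      Nat.choose_symm_of_eq_add (by ring)] at hch
    have hch' : ((2 * (P + Q + e)).choose (2 * P + e) : ℝ) = ((2 * (P + Q + e)).factorial : ℝ) *
        gi (2 * P + e + 1) * gi (2 * Q + e + 1) := by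
      have g1 := gi_nat (2 * P + e)
      have g2 := gi_nat (2 * Q + e)
      push_cast at g1 g2
      rw [g1, g2, ← hch]
      push_cast
      field_simp
    rw [hch']
    push_cast
    ring
  · have : IsEmpty ((fun x : ℕ × ℕ × ℕ => (x.1 + x.2.1 + x.2.2, x.1 + 2 * x.2.1)) ⁻¹' {(k, i)}) := by
      constructor
      rintro ⟨⟨m, p, q⟩, h⟩
      simp only [Set.mem_preimage, Set.mem_singleton_iff, Prod.mk.injEq] at h
      omega
    rw [tsum_empty]
    unfold triV
    simp only
    rw [Nat.choose_eq_zero_of_lt (by omega)]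
    simp

lemma triU_hasSum (μ a b : ℝ) (hμ : 0 < μ) : HasSum (triU μ a b) (phi μ ((a - b) ^ 2)) := by
  have h0 := (triU_summable μ a b hμ).hasSum
  have h1 := h0.tsum_fiberwise (fun x : ℕ × ℕ × ℕ => (x.1 + x.2.1 + x.2.2, x.1 + 2 * x.2.1))
  have h2 : HasSum (triV μ a b) (∑' x, triU μ a b x) := by
    rwa [funext (fun y : ℕ × ℕ => fiber_sum μ a b hμ y.1 y.2)] at h1
  have h3 : HasSum (phiT μ ((a - b) ^ 2)) (∑' x, triU μ a b x) := by
    apply h2.prod_fiberwise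
    intro k
    have : phiT μ ((a - b) ^ 2) k = ∑ i ∈ Finset.range (2 * k + 1), triV μ a b (k, i) := by
      unfold triV phiT
      simp only
      rw [← Finset.mul_sum, ← add_pow, ← sub_eq_add_neg, ← pow_mul]
      ring
    rw [this]
    apply hasSum_sum_of_ne_finset_zero
    intro i hi
    simp only [Finset.mem_range, not_lt] at hi
    unfold triV
    simp only
    rw [Nat.choose_eq_zero_of_lt (by omega)]
    simp
  rw [h3.unique (phi_hasSum μ _ hμ.le)] at h0
  exact h0

/-- the case `x = 1` -/
lemma diag_hasSum (μ a b : ℝ) (hμ : 0 < μ) :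
    HasSum (fun m : ℕ => cf μ m * (a * b) ^ m * (phi (m + μ) (a ^ 2) * phi (m + μ) (b ^ 2)))
      (phi μ ((a - b) ^ 2)) := by
  apply (triU_hasSum μ a b hμ).prod_fiberwise
  intro m
  unfold triU
  simp only
  apply HasSum.mul_left
  have hα : 0 ≤ (m:ℝ) + μ := by positivity
  exact (phi_hasSum _ _ hα).mul (phi_hasSum _ _ hα)
    ((phiT_norm_summable _ _ hα).mul_norm (phiT_norm_summable _ _ hα)).of_norm

lemma phi_shift (μ w h : ℝ) (hμ : 0 < μ) :
    HasSum (fun j : ℕ => (-h) ^ j * gi (j + 1) * phi (μ + j) w) (phi μ (w + h)) := by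
  set f : ℕ × ℕ → ℝ := fun x => (-h) ^ x.1 * gi (x.1 + 1) * phiT (μ + x.1) w x.2 with hf
  have hs : Summable f := by
    have h1 := exp_sum2 |h| |w| (abs_nonneg _) (abs_nonneg _)
    refine Summable.of_norm_bounded (h1.mul_right (gi (μ + 1))) ?_
    rintro ⟨j, l⟩
    simp only [hf]
    have b1 := phiT_bound (μ + j) w (by positivity) l
    have b2 := gi_le (μ + 1) (by linarith) j
    rw [show μ + 1 + (j:ℝ) = μ + j + 1 by ring] at b2
    rw [gi_nat, norm_mul, norm_mul, norm_pow, norm_neg, Real.norm_eq_abs]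
    rw [Real.norm_of_nonneg (by positivity : (0:ℝ) ≤ ((j.factorial : ℝ))⁻¹), ← div_eq_mul_inv, mul_assoc]
    gcongr
    exact b1.trans (by gcongr)
  have h0 := hs.hasSum
  have h1 := hasSum_antidiag h0
  have h2 : (fun n => ∑ x ∈ Finset.HasAntidiagonal.antidiagonal n, f x) = phiT μ (w + h) := by
    funext n
    unfold phiT
    rw [add_comm w h, (Commute.all h w).add_pow', Finset.mul_sum, Finset.sum_mul, Finset.sum_mul]
    apply Finset.sum_congr rfl
    rintro ⟨j, l⟩ hx
    rw [Finset.HasAntidiagonal.mem_antidiagonal] at hx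
    simp only at hx
    subst hx
    simp only [hf, phiT, nsmul_eq_mul]
    have hch := Nat.add_choose_mul_factorial_mul_factorial j l
    rw [← Nat.choose_symm_add] at hch
    have hch' : ((j + l).choose j : ℝ) * (((j + l).factorial : ℝ))⁻¹ = ((j.factorial : ℝ))⁻¹ * ((l.factorial : ℝ))⁻¹ := by
      rw [← hch]; push_cast
      have : ((j + l).choose j : ℝ) ≠ 0 := by
        exact_mod_cast (Nat.choose_pos (Nat.le_add_right j l)).ne'
      field_simp
    rw [gi_nat, gi_nat, gi_nat]
    push_cast
    rw [show (l:ℝ) + (μ + j) + 1 = j + l + μ + 1 by ring, neg_pow h, pow_add]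
    linear_combination (-((-1) ^ j * (-1) ^ l * h ^ j * w ^ l * gi (j + l + μ + 1))) * hch'
  rw [h2] at h1
  rw [h1.unique (phi_hasSum μ _ hμ.le)] at h0
  apply h0.prod_fiberwise
  intro j
  simp only [hf]
  exact (phi_hasSum _ _ (by positivity)).mul_left _

noncomputable def dbl (lam a b y : ℝ) (x : ℕ × ℕ) : ℝ :=
  (-(4 * (a * b) * y)) ^ x.1 * gi (x.1 + 1) *
    (cf (lam + x.1) x.2 * (a * b) ^ x.2 * (phi (x.2 + (lam + x.1)) (a ^ 2) * phi (x.2 + (lam + x.1)) (b ^ 2)))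

noncomputable def dblB (lam a b : ℝ) (x : ℕ × ℕ) : ℝ :=
  Real.exp |a ^ 2| * Real.exp |b ^ 2| * gi (lam + 1) *
    (|4 * (a * b)| ^ x.1 / (x.1.factorial : ℝ) * (|2 * (a * b)| ^ x.2 / (x.2.factorial : ℝ)))

lemma dblB_summable (lam a b : ℝ) : Summable (dblB lam a b) :=
  (exp_sum2 |4 * (a * b)| |2 * (a * b)| (abs_nonneg _) (abs_nonneg _)).mul_left _

lemma dbl_bound (lam a b y : ℝ) (hl : 0 < lam) (hy : |y| ≤ 1) (x : ℕ × ℕ) :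
    ‖dbl lam a b y x‖ ≤ dblB lam a b x := by
  obtain ⟨j, m⟩ := x
  simp only [dbl, dblB]
  have hμ : 0 < lam + j := by positivity
  have h1 := phi_bound (m + (lam + j)) (a ^ 2) (by positivity)
  have h2 := phi_bound (m + (lam + j)) (b ^ 2) (by positivity)
  have h3 := cf_bound (lam + j) hμ m
  have h4 := gi_le (lam + 1) (by linarith) (m + j)
  push_cast at h4
  rw [show lam + 1 + ((m:ℝ) + j) = m + (lam + j) + 1 by ring] at h4
  have h5 := gi_pos ((m:ℝ) + (lam + j) + 1) (by positivity)
  have hc := cf_pos (lam + j) hμ m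
  rw [gi_nat]
  simp only [norm_mul, norm_pow, norm_neg, Real.norm_eq_abs]
  rw [abs_of_pos hc, abs_of_pos (by positivity : (0:ℝ) < ((j.factorial : ℝ))⁻¹)]
  have e1 : |4 * (a * b)| ^ j = (|4| * (|a| * |b|)) ^ j := by rw [abs_mul, abs_mul]
  have e2 : |2 * (a * b)| ^ m = 2 ^ m * (|a| * |b|) ^ m := by rw [abs_mul, mul_pow, abs_mul]; simp
  rw [e1, e2, mul_pow (|4| * (|a| * |b|)) |y|]
  have hy' : |y| ^ j ≤ 1 := pow_le_one₀ (abs_nonneg _) hy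
  set F := (|(4:ℝ)| * (|a| * |b|)) ^ j
  set H := (|a| * |b|) ^ m
  set E1 := Real.exp |a ^ 2|
  set E2 := Real.exp |b ^ 2|
  set g := gi (m + (lam + j) + 1)
  have hF : 0 ≤ F := by positivity
  have hH : 0 ≤ H := by positivity
  have hE1 : 0 ≤ E1 := by positivity
  have hE2 : 0 ≤ E2 := by positivity
  calc _ ≤ F * 1 * ((j.factorial : ℝ))⁻¹ * (cf (lam + j) m * H * ((E1 * g) * (E2 * g))) := by gcongr
    _ = F * ((j.factorial : ℝ))⁻¹ * H * E1 * E2 * ((cf (lam + j) m * g) * g) := by ring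
    _ ≤ F * ((j.factorial : ℝ))⁻¹ * H * E1 * E2 * ((2 ^ m / (m.factorial : ℝ)) * gi (lam + 1)) := by gcongr
    _ = _ := by ring

lemma dbl_hasSum (lam a b y : ℝ) (hl : 0 < lam) (hy : |y| ≤ 1) :
    HasSum (dbl lam a b y) (phi lam ((a - b) ^ 2 + 4 * (a * b) * y)) := by
  have hs : Summable (dbl lam a b y) := Summable.of_norm_bounded (dblB_summable lam a b) (dbl_bound lam a b y hl hy)
  have h0 := hs.hasSum
  have h1 : HasSum (fun j : ℕ => (-(4 * (a * b) * y)) ^ j * gi (j + 1) * phi (lam + j) ((a - b) ^ 2))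
      (∑' x, dbl lam a b y x) := by
    apply h0.prod_fiberwise
    intro j
    simp only [dbl]
    exact (diag_hasSum (lam + j) a b (by positivity)).mul_left _
  rwa [h1.unique (phi_shift lam _ _ hl)] at h0

lemma alg_aux (N X1 X2 X3 X4 X5 lam Fn Fm Fj G0 R G V U A B W Y K : ℝ) (h1 : lam ≠ 0) (h2 : Fn ≠ 0)
    (h3 : Fm ≠ 0) (h4 : Fj ≠ 0) (h5 : R ≠ 0) (h6 : G ≠ 0) (h7 : X5 ≠ 0)
    (h : X1 * X2 = K * X4 * X5 * X3) :
    N * X1 / (lam * Fn) * (lam * G0 / (R * G)) ^ 2 * (R ^ 2 * V * U) * (G * A) * (G * B) *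
      (W * Fn / Fm * X2 / (X5 * Fj) * Y) =
    lam * G0 * (W * K * U * Y * Fj⁻¹ * (X4 * G0 * N * (X3 * Fm⁻¹) * V * (A * B))) := by
  have e : X1 * X2 / X5 = K * X4 * X3 := by
    rw [div_eq_iff h7, h]; ring
  have e1 : N * X1 / (lam * Fn) * (lam * G0 / (R * G)) ^ 2 * (R ^ 2 * V * U) * (G * A) * (G * B) *
      (W * Fn / Fm * X2 / (X5 * Fj) * Y) =
      (X1 * X2 / X5) * (N * G0 ^ 2 * V * U * A * B * W * Y * Fj⁻¹ * Fm⁻¹) *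
      (lam ^ 2 * lam⁻¹) * (Fn * Fn⁻¹) * (R * R⁻¹) ^ 2 * (G * G⁻¹) ^ 2 := by
    simp only [div_eq_mul_inv, mul_inv, mul_pow]; ring
  rw [e1, e, mul_inv_cancel₀ h2, mul_inv_cancel₀ h5, mul_inv_cancel₀ h6, pow_two lam, mul_assoc lam lam,
    mul_inv_cancel₀ h1]
  ring

lemma term_eq (lam a b x : ℝ) (hl : 0 < lam) (n : ℕ) :
    ((n : ℝ) + lam) * poch (2 * lam) n / (lam * (n.factorial : ℝ)) *
            (Real.Gamma (lam + 1) / (2 ^ n * Real.Gamma ((n : ℝ) + lam + 1))) ^ 2 *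
            ((2 * a) * (2 * b)) ^ n * besselJR ((n : ℝ) + lam) (2 * a) * besselJR ((n : ℝ) + lam) (2 * b) *
            gegenbauerN lam n x =
    Real.Gamma (lam + 1) * ∑ z ∈ Finset.HasAntidiagonal.antidiagonal n, dbl lam a b ((1 - x) / 2) z := by
  rw [Finset.Nat.sum_antidiagonal_eq_sum_range_succ_mk, gegenbauerN, Finset.mul_sum, Finset.mul_sum]
  apply Finset.sum_congr rfl
  intro j hj
  obtain ⟨m, rfl⟩ : ∃ m, n = m + j := ⟨n - j, by have := Finset.mem_range.mp hj; omega⟩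
  rw [bessel_phi, bessel_phi]
  simp only [dbl, cf, Nat.add_sub_cancel]
  rw [gi_nat, gi_nat]
  have hneg := poch_neg m j
  have hadd1 := poch_add (2 * lam) (m + j) j
  have hadd2 := poch_add (2 * lam) (2 * j) m
  rw [show 2 * j + m = m + j + j by ring, poch_double, hadd1] at hadd2
  have hG := Gamma_poch lam hl j
  have hG1 := Real.Gamma_add_one hl.ne'
  have p1 := poch_pos (lam + 1/2) (by positivity) j
  have p0 := Real.Gamma_pos_of_pos (show 0 < ((m + j : ℕ) : ℝ) + lam + 1 by positivity)
  have p2 := Real.Gamma_pos_of_pos hl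
  have f1 : (m.factorial : ℝ) ≠ 0 := by positivity
  have f2 : ((m + j).factorial : ℝ) ≠ 0 := by positivity
  have f3 : (j.factorial : ℝ) ≠ 0 := by positivity
  rw [hG, hG1, show (2 * a / 2) = a by ring, show (2 * b / 2) = b by ring]
  push_cast at *
  rw [show (m:ℝ) + (lam + j) = m + j + lam by ring]
  rw [show 2 * lam + 2 * (j:ℝ) = 2 * (lam + j) by ring, show 2 * lam + ((m:ℝ) + j) = m + j + 2 * lam by ring] at hadd2
  have hneg' : poch (-((m:ℝ) + j)) j = (-1) ^ j * ((m + j).factorial : ℝ) / (m.factorial : ℝ) := by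
    field_simp; linarith
  rw [hneg']
  have e4 : (2 * a * (2 * b)) ^ (m + j) = (2 ^ (m + j)) ^ 2 * (a * b) ^ m * (a * b) ^ j := by
    rw [← pow_mul, mul_assoc _ ((a * b) ^ m), ← pow_add, mul_comm (m + j) 2, pow_mul, ← mul_pow]
    congr 1; ring
  have e5 : (-(4 * (a * b) * ((1 - x) / 2))) ^ j = (-1) ^ j * 4 ^ j * (a * b) ^ j * ((1 - x) / 2) ^ j := by
    rw [← mul_pow, ← mul_pow, ← mul_pow]; ring
  rw [e4, e5]
  generalize ((1 - x) / 2) ^ j = Y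
  generalize phi (m + j + lam) (a ^ 2) = A
  generalize phi (m + j + lam) (b ^ 2) = B
  generalize poch (2 * lam) (m + j) = X1 at *
  generalize poch (m + j + 2 * lam) j = X2 at *
  generalize poch (2 * (lam + j)) m = X3 at *
  generalize poch lam j = X4 at *
  generalize poch (lam + 1/2) j = X5 at *
  generalize Real.Gamma (m + j + lam + 1) = G at *
  generalize Real.Gamma lam = G0 at *
  generalize (a * b) ^ j = U
  generalize (a * b) ^ m = V
  generalize (-1 : ℝ) ^ j = W
  have ht : (2 : ℝ) ^ (m + j) ≠ 0 := by positivity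
  generalize (2 : ℝ) ^ (m + j) = R at *
  generalize (m:ℝ) + j + lam = N at *
  generalize (m.factorial : ℝ) = Fm at *
  generalize (j.factorial : ℝ) = Fj at *
  generalize ((m + j).factorial : ℝ) = Fn at *
  generalize (4 : ℝ) ^ j = K at *
  have := alg_aux N X1 X2 X3 X4 X5 lam Fn Fm Fj G0 R G V U A B W Y K hl.ne' f2 f1 f3 ht p0.ne' p1.ne' hadd2
  linear_combination this

theorem gegenbauer_addition_theorem (lam : ℝ) (hlam : 0 < lam) (s t : ℝ) :
    TendstoUniformly
      (fun (m : ℕ) (θ : ℝ) =>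
        ∑ n ∈ Finset.range m,
          ((n : ℝ) + lam) * poch (2 * lam) n / (lam * (n.factorial : ℝ)) *
            (Real.Gamma (lam + 1) / (2 ^ n * Real.Gamma ((n : ℝ) + lam + 1))) ^ 2 *
            (s * t) ^ n * besselJR ((n : ℝ) + lam) s * besselJR ((n : ℝ) + lam) t *
            gegenbauerN lam n (Real.cos θ))
      (fun θ : ℝ => besselJR lam (Real.sqrt (s ^ 2 + t ^ 2 - 2 * s * t * Real.cos θ)))
      atTop := by
  obtain ⟨a, rfl⟩ : ∃ a, s = 2 * a := ⟨s / 2, by ring⟩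
  obtain ⟨b, rfl⟩ : ∃ b, t = 2 * b := ⟨t / 2, by ring⟩
  have hy : ∀ θ : ℝ, |(1 - Real.cos θ) / 2| ≤ 1 := by
    intro θ
    rw [abs_le]
    constructor <;> linarith [Real.cos_le_one θ, Real.neg_one_le_cos θ]
  simp only [term_eq lam a b _ hlam]
  have hlim : ∀ θ : ℝ, besselJR lam (Real.sqrt ((2 * a) ^ 2 + (2 * b) ^ 2 - 2 * (2 * a) * (2 * b) * Real.cos θ)) =
      ∑' n : ℕ, Real.Gamma (lam + 1) *
        ∑ z ∈ Finset.HasAntidiagonal.antidiagonal n, dbl lam a b ((1 - Real.cos θ) / 2) z := by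
    intro θ
    have h := (hasSum_antidiag (dbl_hasSum lam a b _ hlam (hy θ))).mul_left (Real.Gamma (lam + 1))
    rw [h.tsum_eq, bessel_phi, div_pow, Real.sq_sqrt]
    · congr 2; ring
    · nlinarith [sq_nonneg (a * Real.cos θ - b), sq_nonneg (a * Real.sin θ), Real.sin_sq_add_cos_sq θ]
  simp only [hlim]
  refine tendstoUniformly_tsum_nat
    (u := fun n => |Real.Gamma (lam + 1)| * ∑ z ∈ Finset.HasAntidiagonal.antidiagonal n, dblB lam a b z)
    ((hasSum_antidiag (dblB_summable lam a b).hasSum).summable.mul_left _) ?_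
  intro n θ
  rw [norm_mul, Real.norm_eq_abs]
  gcongr
  exact norm_sum_le_of_le _ (fun z _ => dbl_bound lam a b _ hlam (hy θ) z)
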